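/- Let K be a field of characteristic zero, α, β ∈ K with β ≠ 0, and suppose λ, μ ∈ K are the roots of t² − αt − β. Let A = A(α,β,1) and let Ã' be the K-subalgebra of A generated by U and DU − λUD. If f and g are nonzero elements of A such that fg ∈ Ã', then f ∈ Ã' and g ∈ Ã'. -/

import Mathlib

noncomputable section

/-- Defining relations of the down-up algebra `A(α,β,γ)`:
`D = ι 0`, `U = ι 1`, relations `DU² = αUDU + βU²D + γU` and `D²U = αDUD + βUD² + γD`. -/
inductive DownUpRel (K : Type) [Field K] (a b g : K) :
    FreeAlgebra K (Fin 2) → FreeAlgebra K (Fin 2) → Prop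
  | rel1 : DownUpRel K a b g
      (FreeAlgebra.ι K (0 : Fin 2) * FreeAlgebra.ι K (1 : Fin 2) * FreeAlgebra.ι K (1 : Fin 2))
      (a • (FreeAlgebra.ι K (1 : Fin 2) * FreeAlgebra.ι K (0 : Fin 2) * FreeAlgebra.ι K (1 : Fin 2)) +
       b • (FreeAlgebra.ι K (1 : Fin 2) * FreeAlgebra.ι K (1 : Fin 2) * FreeAlgebra.ι K (0 : Fin 2)) +
       g • FreeAlgebra.ι K (1 : Fin 2))
  | rel2 : DownUpRel K a b g
      (FreeAlgebra.ι K (0 : Fin 2) * FreeAlgebra.ι K (0 : Fin 2) * FreeAlgebra.ι K (1 : Fin 2))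
      (a • (FreeAlgebra.ι K (0 : Fin 2) * FreeAlgebra.ι K (1 : Fin 2) * FreeAlgebra.ι K (0 : Fin 2)) +
       b • (FreeAlgebra.ι K (1 : Fin 2) * FreeAlgebra.ι K (0 : Fin 2) * FreeAlgebra.ι K (0 : Fin 2)) +
       g • FreeAlgebra.ι K (0 : Fin 2))

/-- The down-up algebra `A(α,β,γ)`. -/
abbrev DownUp (K : Type) [Field K] (a b g : K) := RingQuot (DownUpRel K a b g)

/-- The generator `D` of `A(α,β,γ)`. -/
def DownUp.D (K : Type) [Field K] (a b g : K) : DownUp K a b g :=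
  RingQuot.mkAlgHom K (DownUpRel K a b g) (FreeAlgebra.ι K (0 : Fin 2))

/-- The generator `U` of `A(α,β,γ)`. -/
def DownUp.U (K : Type) [Field K] (a b g : K) : DownUp K a b g :=
  RingQuot.mkAlgHom K (DownUpRel K a b g) (FreeAlgebra.ι K (1 : Fin 2))

namespace DUProof

open Polynomial

variable {K : Type} [Field K]

/-- The automorphism `X ↦ μ X + 1`. -/
def tau (m : K) : K[X] →ₐ[K] K[X] := Polynomial.aeval (C m * X + 1)

lemma tau_X (m : K) : tau m X = C m * X + 1 := by simp [tau]

lemma tau_ne {m : K} (hm : m ≠ 0) {q : K[X]} (hq : q ≠ 0) : tau m q ≠ 0 := by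
  have h : tau m q = q.comp (C m * X + 1) := rfl
  rw [h]
  intro h0
  have h1 : (q.comp (C m * X + C 1)).natDegree = q.natDegree := by
    rw [natDegree_comp, natDegree_linear hm, mul_one]
  rcases comp_eq_zero_iff.1 h0 with h2 | ⟨_, h2⟩
  · exact hq h2
  · have h3 : (C m * X + C (1:K)).natDegree = 1 := natDegree_linear hm
    rw [C_1, h2, natDegree_C] at h3
    omega

lemma tau_pow_ne {m : K} (hm : m ≠ 0) (n : ℕ) {q : K[X]} (hq : q ≠ 0) : (tau m ^ n) q ≠ 0 := by
  induction n with
  | zero => simpa using hq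
  | succ n ih =>
    rw [pow_succ']
    exact tau_ne hm ih

lemma tau_pow_succ (m : K) (n : ℕ) (q : K[X]) : (tau m ^ (n+1)) q = (tau m ^ n) (tau m q) := by
  rw [pow_succ]; rfl

lemma tau_pow_succ' (m : K) (n : ℕ) (q : K[X]) : (tau m ^ (n+1)) q = tau m ((tau m ^ n) q) := by
  rw [pow_succ']; rfl

/-- The coefficients `c_i` with `D U^i = l^i U^i D + U^(i-1) c_i(w)`. -/
def cc (l m : K) : ℕ → K[X]
  | 0 => 0
  | (i+1) => C l * cc l m i + (tau m ^ i) X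

/-- The model module with basis `U^i w^j D^k`, indexed by `(k,i)` with coefficients in `K[w]`. -/
abbrev M (K : Type) [Field K] := (ℕ × ℕ) →₀ K[X]

/-- Action of `U`. -/
def opU (K : Type) [Field K] : M K →ₗ[K] M K :=
  Finsupp.lsum K fun p => Finsupp.lsingle (p.1, p.2 + 1)

/-- Action of `D`. -/
def opD (l m : K) : M K →ₗ[K] M K :=
  Finsupp.lsum K fun p =>
    (Finsupp.lsingle (p.1 + 1, p.2)) ∘ₗ (LinearMap.mulLeft K (C (l ^ p.2))) ∘ₗ (tau m).toLinearMap
    + (Finsupp.lsingle (p.1, p.2 - 1)) ∘ₗ (LinearMap.mulLeft K (cc l m p.2))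

lemma opU_single (k i : ℕ) (q : K[X]) :
    opU K (Finsupp.single (k,i) q) = Finsupp.single (k,i+1) q := by
  simp [opU]

lemma opD_single (l m : K) (k i : ℕ) (q : K[X]) :
    opD l m (Finsupp.single (k,i) q) = Finsupp.single (k+1,i) (C (l^i) * tau m q)
      + Finsupp.single (k,i-1) (cc l m i * q) := by
  simp [opD]

/-- Action of `w = DU - l UD`. -/
def opW (l m : K) : Module.End K (M K) := opD l m * opU K - l • (opU K * opD l m)

lemma opW_single (l m : K) (k i : ℕ) (q : K[X]) :
    opW l m (Finsupp.single (k,i) q) = Finsupp.single (k,i) ((tau m ^ i) X * q) := by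
  have h : opW l m (Finsupp.single (k,i) q) = opD l m (opU K (Finsupp.single (k,i) q))
      - l • opU K (opD l m (Finsupp.single (k,i) q)) := rfl
  rw [h, opU_single, opD_single, opD_single, map_add, opU_single, opU_single, smul_add,
    Finsupp.smul_single, Finsupp.smul_single]
  have e1 : l • (C (l^i) * tau m q) = C (l^(i+1)) * tau m q := by
    rw [smul_eq_C_mul, ← mul_assoc, ← C_mul, pow_succ']
  rw [e1]
  have e2 : Finsupp.single (k, i - 1 + 1) (l • (cc l m i * q))
      = Finsupp.single (k, i) (C l * cc l m i * q) := by
    cases i with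
    | zero => simp [cc]
    | succ i => simp [smul_eq_C_mul, mul_assoc]
  rw [e2, Nat.add_sub_cancel]
  simp only [cc, add_mul, Finsupp.single_add]
  abel

lemma end_ext {f g : Module.End K (M K)}
    (h : ∀ k i q, f (Finsupp.single (k,i) q) = g (Finsupp.single (k,i) q)) : f = g := by
  apply Finsupp.lhom_ext
  rintro ⟨k,i⟩ q
  exact h k i q

lemma WU (l m : K) : opW l m * opU K = m • (opU K * opW l m) + opU K := by
  apply end_ext
  intro k i q
  simp only [Module.End.mul_apply, LinearMap.add_apply, LinearMap.smul_apply, opU_single,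
    opW_single, Finsupp.smul_single, ← Finsupp.single_add]
  congr 1
  rw [tau_pow_succ, tau_X, map_add, map_mul, map_one, smul_eq_C_mul]
  have : (tau m ^ i) (C m) = C m := (tau m ^ i).commutes m
  rw [this]; ring

lemma DW (l m : K) : opD l m * opW l m = m • (opW l m * opD l m) + opD l m := by
  apply end_ext
  intro k i q
  simp only [Module.End.mul_apply, LinearMap.add_apply, LinearMap.smul_apply, opD_single,
    opW_single, map_add, smul_add, Finsupp.smul_single]
  have hc : ∀ i, (tau m ^ i) (C m) = C m := fun i => (tau m ^ i).commutes m
  have e1 : C (l ^ i) * tau m ((tau m ^ i) X * q)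
      = m • ((tau m ^ i) X * (C (l^i) * tau m q)) + C (l^i) * tau m q := by
    rw [map_mul, ← tau_pow_succ', tau_pow_succ, tau_X, map_add, map_mul, map_one, hc, smul_eq_C_mul]
    ring
  have e2 : cc l m i * ((tau m ^ i) X * q)
      = m • ((tau m ^ (i-1)) X * (cc l m i * q)) + cc l m i * q := by
    cases i with
    | zero => simp [cc]
    | succ i =>
      rw [Nat.add_sub_cancel, tau_pow_succ, tau_X, map_add, map_mul, map_one, hc, smul_eq_C_mul]
      ring
  rw [e1, e2, Finsupp.single_add, Finsupp.single_add]
  abel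

/-- Passing between the down-up relations and the Ore relations. -/
lemma rel1_iff {R : Type} [Ring R] [Algebra K R] (d u : R) (l m : K) :
    ((d * u - l • (u * d)) * u = m • (u * (d * u - l • (u * d))) + u) ↔
    d * u * u = (l + m) • (u * d * u) + (-(l*m)) • (u * u * d) + (1:K) • u := by
  simp only [sub_mul, mul_sub, smul_mul_assoc, mul_smul_comm, ← mul_assoc, add_smul, smul_sub,
    neg_smul, one_smul, smul_smul, mul_comm m l]
  constructor <;> intro h
  · rw [sub_eq_iff_eq_add] at h
    rw [h]; abel
  · rw [h]; abel

lemma rel2_iff {R : Type} [Ring R] [Algebra K R] (d u : R) (l m : K) :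
    (d * (d * u - l • (u * d)) = m • ((d * u - l • (u * d)) * d) + d) ↔
    d * d * u = (l + m) • (d * u * d) + (-(l*m)) • (u * d * d) + (1:K) • d := by
  simp only [sub_mul, mul_sub, smul_mul_assoc, mul_smul_comm, ← mul_assoc, add_smul, smul_sub,
    neg_smul, one_smul, smul_smul, mul_comm m l]
  constructor <;> intro h
  · rw [sub_eq_iff_eq_add] at h
    rw [h]; abel
  · rw [h]; abel

section abstractpart

variable {R : Type} [Ring R] [Algebra K R] (d u : R) (l m : K)

/-- Normal-ordering map. -/
def N (d u w : R) : M K →ₗ[K] R :=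
  Finsupp.lsum K fun p =>
    (LinearMap.mulLeft K (u ^ p.2)) ∘ₗ (LinearMap.mulRight K (d ^ p.1)) ∘ₗ
      (Polynomial.aeval w : K[X] →ₐ[K] R).toLinearMap

lemma N_single (d u w : R) (k i : ℕ) (q : K[X]) :
    N d u w (Finsupp.single (k,i) q) = u ^ i * (aeval w q * d ^ k) := by
  simp [N]

lemma aeval_tau (w : R) (q : K[X]) : aeval w (tau m q) = aeval (m • w + 1) q := by
  induction q using Polynomial.induction_on' with
  | add p q hp hq => simp only [map_add, hp, hq]
  | monomial n a =>
    simp [tau, ← C_mul_X_pow_eq_monomial, Algebra.smul_def]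

lemma swap1 {x w w' : R} (h : x * w = w' * x) (q : K[X]) :
    x * aeval w q = aeval w' q * x := by
  induction q using Polynomial.induction_on' with
  | add p q hp hq => simp only [map_add, mul_add, add_mul, hp, hq]
  | monomial n a =>
    have : SemiconjBy x w w' := h
    have h2 := (this.pow_right n).eq
    simp only [aeval_monomial]
    rw [← mul_assoc, ← Algebra.commutes, mul_assoc, h2, mul_assoc]

lemma swapU {w u : R} (h : w * u = m • (u * w) + u) (q : K[X]) :
    aeval w q * u = u * aeval w (tau m q) := by
  rw [aeval_tau]
  refine (swap1 ?_ q).symm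
  rw [h, mul_add, mul_one, mul_smul_comm]

lemma swapUpow {w u : R} (h : w * u = m • (u * w) + u) (i : ℕ) (q : K[X]) :
    aeval w q * u ^ i = u ^ i * aeval w ((tau m ^ i) q) := by
  induction i generalizing q with
  | zero => simp
  | succ i ih =>
    rw [pow_succ', ← mul_assoc, swapU m h, mul_assoc, ih, tau_pow_succ, mul_assoc]

lemma swapD {w d : R} (h : d * w = m • (w * d) + d) (q : K[X]) :
    d * aeval w q = aeval w (tau m q) * d := by
  rw [aeval_tau]
  refine swap1 ?_ q
  rw [h, add_mul, one_mul, smul_mul_assoc]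

lemma DUpow {w d u : R} (hw : d * u = l • (u * d) + w) (h : w * u = m • (u * w) + u) (i : ℕ) :
    d * u ^ i = l ^ i • (u ^ i * d) + u ^ (i-1) * aeval w (cc l m i) := by
  induction i with
  | zero => simp [cc]
  | succ i ih =>
    have h1 := swapUpow m h i X
    rw [aeval_X] at h1
    have h2 : u * (u ^ (i-1) * aeval w (cc l m i)) = u ^ i * aeval w (cc l m i) := by
      cases i with
      | zero => simp [cc]
      | succ i => rw [← mul_assoc, ← pow_succ', Nat.add_sub_cancel]
    have h3 : d * u ^ (i+1) = l • (u * (d * u ^ i)) + w * u ^ i := by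
      rw [pow_succ', ← mul_assoc, hw, add_mul, smul_mul_assoc, mul_assoc]
    rw [h3, ih, h1, mul_add, h2, Nat.add_sub_cancel, cc, map_add, map_mul, aeval_C, mul_add,
      smul_add, mul_smul_comm, smul_smul, ← pow_succ', ← mul_assoc, ← pow_succ',
      ← Algebra.smul_def, mul_smul_comm, add_assoc]

lemma N_opU (w : R) (x : M K) : N d u w (opU K x) = u * N d u w x := by
  induction x using Finsupp.induction_linear with
  | zero => simp
  | add f g hf hg => simp only [map_add, mul_add, hf, hg]
  | single p q =>
    obtain ⟨k,i⟩ := p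
    rw [opU_single, N_single, N_single, pow_succ', mul_assoc]

lemma N_opD {w : R} (hw : d * u = l • (u * d) + w) (h : w * u = m • (u * w) + u)
    (h' : d * w = m • (w * d) + d) (x : M K) : N d u w (opD l m x) = d * N d u w x := by
  induction x using Finsupp.induction_linear with
  | zero => simp
  | add f g hf hg => simp only [map_add, mul_add, hf, hg]
  | single p q =>
    obtain ⟨k,i⟩ := p
    rw [opD_single, map_add, N_single, N_single, N_single, ← mul_assoc d, DUpow l m hw h, add_mul,
      smul_mul_assoc, mul_assoc (u^i) d, ← mul_assoc d, swapD m h', map_mul, map_mul, aeval_C,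
      ← Algebra.smul_def, smul_mul_assoc, mul_smul_comm, pow_succ']
    simp only [mul_assoc]

end abstractpart

/-! ### Leading terms -/

/-- Lexicographic order on pairs. -/
def lt (a b : ℕ × ℕ) : Prop := a.1 < b.1 ∨ (a.1 = b.1 ∧ a.2 < b.2)

/-- Elements supported strictly below `b`. -/
def Low (K : Type) [Field K] (b : ℕ × ℕ) : Submodule K (M K) :=
  Submodule.span K {x | ∃ a q, lt a b ∧ x = Finsupp.single a q}

lemma single_low {a b : ℕ × ℕ} (h : lt a b) (q : K[X]) : Finsupp.single a q ∈ Low K b :=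
  Submodule.subset_span ⟨a, q, h, rfl⟩

lemma low_apply {b : ℕ × ℕ} {x : M K} (hx : x ∈ Low K b) {c : ℕ × ℕ} (hc : ¬ lt c b) : x c = 0 := by
  induction hx using Submodule.span_induction with
  | mem x hx =>
    obtain ⟨a, q, h, rfl⟩ := hx
    rw [Finsupp.single_apply, if_neg]
    rintro rfl
    exact hc h
  | zero => rfl
  | add x y _ _ hx hy => simp [hx, hy]
  | smul r x _ hx => simp [hx]

lemma low_map {f : Module.End K (M K)} {a b : ℕ × ℕ}
    (h : ∀ k i q, lt (k,i) a → f (Finsupp.single (k,i) q) ∈ Low K b) {x : M K}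
    (hx : x ∈ Low K a) : f x ∈ Low K b := by
  have : Low K a ≤ (Low K b).comap f := by
    apply Submodule.span_le.2
    rintro _ ⟨⟨k,i⟩, q, hlt, rfl⟩
    exact h k i q hlt
  exact this hx

lemma opU_low {k i : ℕ} {x : M K} (hx : x ∈ Low K (k,i)) : opU K x ∈ Low K (k,i+1) := by
  refine low_map (f := opU K) ?_ hx
  intro k' i' q h
  rw [opU_single]
  apply single_low
  simp only [lt] at *; omega

lemma opD_low (l m : K) {k i : ℕ} {x : M K} (hx : x ∈ Low K (k,i)) :
    opD l m x ∈ Low K (k+1,i) := by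
  refine low_map (f := opD l m) ?_ hx
  intro k' i' q h
  rw [opD_single]
  apply add_mem <;> apply single_low <;> simp only [lt] at * <;> omega

lemma aevalW_single (l m : K) (k i : ℕ) (q r : K[X]) :
    (aeval (opW l m) q : Module.End K (M K)) (Finsupp.single (k,i) r)
      = Finsupp.single (k,i) ((tau m ^ i) q * r) := by
  induction q using Polynomial.induction_on generalizing r with
  | C a =>
    have : (tau m ^ i) (C a) = C a := (tau m ^ i).commutes a
    rw [this, aeval_C, Module.algebraMap_end_apply, Finsupp.smul_single, smul_eq_C_mul]
  | add p q hp hq => simp only [map_add, LinearMap.add_apply, hp, hq, add_mul, Finsupp.single_add]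
  | monomial n a ih =>
    rw [pow_succ, ← mul_assoc, map_mul, aeval_X, Module.End.mul_apply, opW_single, ih,
      map_mul (tau m ^ i) (C a * X ^ n) X, mul_assoc]

lemma aevalW_low (l m : K) (q : K[X]) {k i : ℕ} {x : M K} (hx : x ∈ Low K (k,i)) :
    (aeval (opW l m) q : Module.End K (M K)) x ∈ Low K (k,i) := by
  refine low_map ?_ hx
  intro k' i' r h
  rw [aevalW_single]
  exact single_low h _

lemma opDpow (l m : K) (n k i : ℕ) (r : K[X]) :
    ∃ y ∈ Low K (n+k,i), (opD l m ^ n : Module.End K (M K)) (Finsupp.single (k,i) r)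
      = Finsupp.single (n+k,i) (C ((l^i)^n) * (tau m ^ n) r) + y := by
  induction n with
  | zero => exact ⟨0, zero_mem _, by simp⟩
  | succ n ih =>
    obtain ⟨y, hy, e⟩ := ih
    have ek : n + k + 1 = n + 1 + k := by omega
    refine ⟨Finsupp.single (n+k,i-1) (cc l m i * (C ((l^i)^n) * (tau m ^ n) r)) + opD l m y,
      add_mem (single_low ?_ _) ?_, ?_⟩
    · simp only [lt]; omega
    · rw [← ek]; exact opD_low l m hy
    · rw [pow_succ', Module.End.mul_apply, e, map_add, opD_single, ek, ← add_assoc]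
      congr 3
      have : tau m (C ((l^i)^n)) = C ((l^i)^n) := (tau m).commutes _
      rw [map_mul, this, ← mul_assoc, ← C_mul, ← pow_succ', tau_pow_succ']

lemma opUpow_low (n : ℕ) {k i : ℕ} {x : M K} (hx : x ∈ Low K (k,i)) :
    (opU K ^ n : Module.End K (M K)) x ∈ Low K (k,n+i) := by
  induction n with
  | zero => simpa using hx
  | succ n ih =>
    rw [pow_succ', Module.End.mul_apply, show n + 1 + i = n + i + 1 by omega]
    exact opU_low ih

lemma opUpow_single (n k i : ℕ) (q : K[X]) :
    (opU K ^ n : Module.End K (M K)) (Finsupp.single (k,i) q) = Finsupp.single (k,n+i) q := by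
  induction n with
  | zero => simp
  | succ n ih =>
    rw [pow_succ', Module.End.mul_apply, ih, opU_single, show n + 1 + i = n + i + 1 by omega]

/-- The leading term of the product of two monomials. -/
lemma lead (l m : K) (a b : ℕ × ℕ) (q r : K[X]) :
    ∃ y ∈ Low K (a + b),
      (N (opD l m : Module.End K (M K)) (opU K) (opW l m) (Finsupp.single a q)) (Finsupp.single b r)
      = Finsupp.single (a + b)
          ((tau m ^ b.2) q * (C ((l^b.2)^a.1) * (tau m ^ a.1) r)) + y := by
  obtain ⟨k, i⟩ := a
  obtain ⟨k', i'⟩ := b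
  obtain ⟨y, hy, e⟩ := opDpow l m k k' i' r
  refine ⟨(opU K ^ i : Module.End K (M K)) ((aeval (opW l m) q : Module.End K (M K)) y),
    opUpow_low i (aevalW_low l m q hy), ?_⟩
  rw [N_single, Module.End.mul_apply, Module.End.mul_apply, e, map_add, map_add, aevalW_single,
    opUpow_single]
  rfl

lemma exists_max {x : M K} (hx : x ≠ 0) : ∃ a, x a ≠ 0 ∧ ∀ b, x b ≠ 0 → b = a ∨ lt b a := by
  obtain ⟨a, ha, h⟩ := Finset.exists_max_image x.support (fun p => toLex p)
    (Finsupp.support_nonempty_iff.2 hx)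
  refine ⟨a, by simpa using ha, fun b hb => ?_⟩
  have h1 := h b (by simpa using hb)
  rw [Prod.Lex.toLex_le_toLex] at h1
  simp only [lt, Prod.ext_iff]
  omega

lemma lead_prod {l m : K} (hl : l ≠ 0) (hm : m ≠ 0) {x y : M K} {a b : ℕ × ℕ} (hxa : x a ≠ 0)
    (hx : ∀ c, x c ≠ 0 → c = a ∨ lt c a) (hyb : y b ≠ 0) (hy : ∀ c, y c ≠ 0 → c = b ∨ lt c b) :
    (N (opD l m : Module.End K (M K)) (opU K) (opW l m) x) y (a + b) ≠ 0 := by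
  have key : (N (opD l m : Module.End K (M K)) (opU K) (opW l m) x) y (a + b)
      = (tau m ^ b.2) (x a) * (C ((l^b.2)^a.1) * (tau m ^ a.1) (y b)) := by
    have ex : x = ∑ c ∈ x.support, Finsupp.single c (x c) := (Finsupp.sum_single x).symm
    have ey : y = ∑ c ∈ y.support, Finsupp.single c (y c) := (Finsupp.sum_single y).symm
    have h1 : (N (opD l m : Module.End K (M K)) (opU K) (opW l m) x) y (a + b)
      = ∑ c ∈ x.support, ∑ e ∈ y.support, (N (opD l m : Module.End K (M K)) (opU K) (opW l m)
          (Finsupp.single c (x c))) (Finsupp.single e (y e)) (a + b) := by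
      conv_lhs => rw [ex, ey]
      simp only [map_sum, LinearMap.sum_apply, Finsupp.finsetSum_apply]
      exact Finset.sum_comm
    have hnl : ∀ c : ℕ × ℕ, ¬ lt c c := by intro c; simp only [lt]; omega
    have hz : ∀ c ∈ x.support, ∀ e ∈ y.support, (c ≠ a ∨ e ≠ b) →
        (N (opD l m : Module.End K (M K)) (opU K) (opW l m)
          (Finsupp.single c (x c))) (Finsupp.single e (y e)) (a + b) = 0 := by
      intro c hc e he hne
      have hc' := hx c (by simpa using hc)
      have he' := hy e (by simpa using he)
      have hlt : lt (c + e) (a + b) := by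
        simp only [lt, Prod.ext_iff, ne_eq, Prod.fst_add, Prod.snd_add] at *
        omega
      obtain ⟨z, hz, h⟩ := lead l m c e (x c) (y e)
      rw [h, Finsupp.add_apply, low_apply hz, Finsupp.single_apply, if_neg, add_zero]
      · intro h; rw [h] at hlt; exact hnl _ hlt
      · simp only [lt] at *; omega
    rw [h1, Finset.sum_eq_single a, Finset.sum_eq_single b]
    · obtain ⟨z, hz, h⟩ := lead l m a b (x a) (y b)
      rw [h, Finsupp.add_apply, low_apply hz (hnl _), Finsupp.single_eq_same, add_zero]
    · intro e he hne
      exact hz a (by simpa using hxa) e he (Or.inr hne)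
    · intro h; exact absurd (by simpa using h) hyb
    · intro c hc hne
      exact Finset.sum_eq_zero fun e he => hz c hc e he (Or.inl hne)
    · intro h; exact absurd (by simpa using h) hxa
  rw [key]
  refine mul_ne_zero (tau_pow_ne hm _ hxa) (mul_ne_zero ?_ (tau_pow_ne hm _ hyb))
  rw [Ne, C_eq_zero]
  exact pow_ne_zero _ (pow_ne_zero _ hl)

/-! ### The representation -/

/-- The generators. -/
def gens (l m : K) : Fin 2 → Module.End K (M K) := ![opD l m, opU K]

/-- The representation of the down-up algebra on the model. -/
def rho (l m : K) : DownUp K (l + m) (-(l * m)) 1 →ₐ[K] Module.End K (M K) :=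
  RingQuot.liftAlgHom K ⟨FreeAlgebra.lift K (gens l m), by
    intro x y h
    cases h with
    | rel1 =>
      simp only [map_add, map_mul, map_smul, FreeAlgebra.lift_ι_apply]
      exact (rel1_iff (opD l m : Module.End K (M K)) (opU K) l m).1 (WU l m)
    | rel2 =>
      simp only [map_add, map_mul, map_smul, FreeAlgebra.lift_ι_apply]
      exact (rel2_iff (opD l m : Module.End K (M K)) (opU K) l m).1 (DW l m)⟩

lemma rho_D (l m : K) : rho l m (DownUp.D K _ _ 1) = opD l m := by
  simp [rho, DownUp.D, gens]

lemma rho_U (l m : K) : rho l m (DownUp.U K _ _ 1) = opU K := by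
  simp [rho, DownUp.U, gens]

/-- The element `w = DU - l UD`. -/
def W (l m : K) : DownUp K (l + m) (-(l * m)) 1 :=
  DownUp.D K _ _ 1 * DownUp.U K _ _ 1 - l • (DownUp.U K _ _ 1 * DownUp.D K _ _ 1)

lemma rho_W (l m : K) : rho l m (W l m) = opW l m := by
  simp only [W, map_sub, map_mul, map_smul, rho_D, rho_U, opW]

lemma A_WU (l m : K) : W l m * DownUp.U K _ _ 1 =
    m • (DownUp.U K _ _ 1 * W l m) + DownUp.U K _ _ 1 := by
  refine (rel1_iff _ _ l m).2 ?_
  have := RingQuot.mkAlgHom_rel K (DownUpRel.rel1 (K := K) (a := l + m) (b := -(l*m)) (g := 1))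
  simp only [map_add, map_mul, map_smul] at this
  exact this

lemma A_DW (l m : K) : DownUp.D K _ _ 1 * W l m =
    m • (W l m * DownUp.D K _ _ 1) + DownUp.D K _ _ 1 := by
  refine (rel2_iff _ _ l m).2 ?_
  have := RingQuot.mkAlgHom_rel K (DownUpRel.rel2 (K := K) (a := l + m) (b := -(l*m)) (g := 1))
  simp only [map_add, map_mul, map_smul] at this
  exact this

/-- Normal-ordering map into the down-up algebra. -/
def NA (l m : K) : M K →ₗ[K] DownUp K (l + m) (-(l * m)) 1 :=
  N (DownUp.D K _ _ 1) (DownUp.U K _ _ 1) (W l m)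

lemma NA_rho (l m : K) (f : DownUp K (l + m) (-(l * m)) 1) (x : M K) :
    NA l m (rho l m f x) = f * NA l m x := by
  obtain ⟨f, rfl⟩ := RingQuot.mkAlgHom_surjective K (DownUpRel K (l+m) (-(l*m)) 1) f
  induction f using FreeAlgebra.induction generalizing x with
  | grade0 r =>
    rw [AlgHom.commutes, AlgHom.commutes, Module.algebraMap_end_apply, map_smul, Algebra.smul_def]
  | grade1 i =>
    fin_cases i
    · change NA l m (rho l m (DownUp.D K _ _ 1) x) = DownUp.D K _ _ 1 * _
      rw [rho_D]
      exact N_opD _ _ l m (by rw [W]; abel) (A_WU l m) (A_DW l m) x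
    · change NA l m (rho l m (DownUp.U K _ _ 1) x) = DownUp.U K _ _ 1 * _
      rw [rho_U]
      exact N_opU _ _ _ x
  | mul a b ha hb => rw [map_mul, map_mul, Module.End.mul_apply, ha, hb, mul_assoc]
  | add a b ha hb => rw [map_add, map_add, LinearMap.add_apply, map_add, ha, hb, add_mul]

/-- Normal form of an element. -/
def ev (l m : K) (f : DownUp K (l + m) (-(l * m)) 1) : M K := rho l m f (Finsupp.single (0,0) 1)

lemma NA_ev (l m : K) (f : DownUp K (l + m) (-(l * m)) 1) : NA l m (ev l m f) = f := by
  rw [ev, NA_rho, NA, N_single]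
  simp

lemma rho_NA (l m : K) (x : M K) :
    rho l m (NA l m x) = N (opD l m : Module.End K (M K)) (opU K) (opW l m) x := by
  induction x using Finsupp.induction_linear with
  | zero => simp
  | add f g hf hg => simp only [map_add, hf, hg]
  | single p q =>
    obtain ⟨k,i⟩ := p
    rw [NA, N_single, N_single, map_mul, map_mul, map_pow, map_pow, rho_D, rho_U,
      ← Polynomial.aeval_algHom_apply, rho_W]

lemma ev_mul (l m : K) (f g : DownUp K (l + m) (-(l * m)) 1) :
    ev l m (f * g) = N (opD l m : Module.End K (M K)) (opU K) (opW l m) (ev l m f) (ev l m g) := by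
  rw [← rho_NA, NA_ev, ev, map_mul]; rfl

/-- The subalgebra. -/
def B (l m : K) : Subalgebra K (DownUp K (l + m) (-(l * m)) 1) :=
  Algebra.adjoin K {DownUp.U K _ _ 1, W l m}

/-- Elements of the model without `D`. -/
def M0 (K : Type) [Field K] : Submodule K (M K) :=
  Submodule.span K {x | ∃ i q, x = Finsupp.single (0,i) q}

lemma M0_apply {x : M K} (hx : x ∈ M0 K) {c : ℕ × ℕ} (hc : c.1 ≠ 0) : x c = 0 := by
  induction hx using Submodule.span_induction with
  | mem x hx =>
    obtain ⟨i, q, rfl⟩ := hx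
    rw [Finsupp.single_apply, if_neg]
    rintro rfl
    exact hc rfl
  | zero => rfl
  | add x y _ _ hx hy => simp [hx, hy]
  | smul r x _ hx => simp [hx]

lemma B_M0 (l m : K) {f : DownUp K (l + m) (-(l * m)) 1} (hf : f ∈ B l m) :
    M0 K ≤ (M0 K).comap (rho l m f) := by
  induction hf using Algebra.adjoin_induction with
  | mem f hf =>
    apply Submodule.span_le.2
    rintro _ ⟨i, q, rfl⟩
    change rho l m f _ ∈ M0 K
    rcases hf with rfl | rfl
    · rw [rho_U, opU_single]; exact Submodule.subset_span ⟨_, _, rfl⟩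
    · rw [rho_W, opW_single]; exact Submodule.subset_span ⟨_, _, rfl⟩
  | algebraMap r =>
    intro x hx
    change rho l m _ x ∈ M0 K
    rw [AlgHom.commutes, Module.algebraMap_end_apply]
    exact Submodule.smul_mem _ _ hx
  | add a b _ _ ha hb =>
    intro x hx
    change rho l m _ x ∈ M0 K
    rw [map_add]
    exact add_mem (ha hx) (hb hx)
  | mul a b _ _ ha hb =>
    intro x hx
    change rho l m _ x ∈ M0 K
    rw [map_mul]
    exact ha (hb hx)

lemma mem_B (l m : K) {f : DownUp K (l + m) (-(l * m)) 1}
    (h : ∀ c, ev l m f c ≠ 0 → c.1 = 0) : f ∈ B l m := by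
  rw [← NA_ev l m f, ← Finsupp.sum_single (ev l m f), Finsupp.sum, map_sum]
  refine sum_mem fun c hc => ?_
  have h0 := h c (by simpa using hc)
  obtain ⟨k, i⟩ := c
  simp only at h0
  subst h0
  rw [NA, N_single, pow_zero, mul_one]
  have hU : DownUp.U K _ _ 1 ∈ B l m := Algebra.subset_adjoin (by simp)
  have hW : W l m ∈ B l m := Algebra.subset_adjoin (by simp)
  refine mul_mem (pow_mem hU _) ?_
  exact Polynomial.aeval_mem_adjoin_singleton K (W l m) |> fun h =>
    (Algebra.adjoin_le (by simpa using hW) : Algebra.adjoin K {W l m} ≤ B l m) h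

theorem main {l m : K} (hl : l ≠ 0) (hm : m ≠ 0) (f g : DownUp K (l + m) (-(l * m)) 1)
    (hf : f ≠ 0) (hg : g ≠ 0) (hfg : f * g ∈ B l m) : f ∈ B l m ∧ g ∈ B l m := by
  have hne : ∀ h : DownUp K (l + m) (-(l * m)) 1, h ≠ 0 → ev l m h ≠ 0 := by
    intro h hh h0
    apply hh
    rw [← NA_ev l m h, h0, map_zero]
  obtain ⟨a, ha, ha'⟩ := exists_max (hne f hf)
  obtain ⟨b, hb, hb'⟩ := exists_max (hne g hg)
  have h1 := lead_prod hl hm ha ha' hb hb'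
  rw [← ev_mul] at h1
  have h2 : ev l m (f * g) ∈ M0 K := B_M0 l m hfg (Submodule.subset_span ⟨0, 1, rfl⟩)
  have h3 : (a + b).1 = 0 := by
    by_contra h
    exact h1 (M0_apply h2 h)
  rw [Prod.fst_add] at h3
  constructor
  · apply mem_B
    intro c hc
    rcases ha' c hc with rfl | h
    · omega
    · simp only [lt] at h; omega
  · apply mem_B
    intro c hc
    rcases hb' c hc with rfl | h
    · omega
    · simp only [lt] at h; omega

end DUProof

/-- For `β ≠ 0`, `λ, μ` the roots of `t² − αt − β`, and `Ã'` the subalgebra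
of `A = A(α,β,1)` generated by `U` and `DU − λUD`: if `f, g ∈ A` are nonzero and `fg ∈ Ã'`,
then `f ∈ Ã'` and `g ∈ Ã'`. -/
theorem downUp_tilde_subalgebra_factor_closed
    (K : Type) [Field K] [CharZero K] (α β lam μ : K) (hβ : β ≠ 0)
    (hsum : lam + μ = α) (hprod : lam * μ = -β)
    (f g : DownUp K α β 1) (hf : f ≠ 0) (hg : g ≠ 0)
    (hfg : f * g ∈ Algebra.adjoin K
        ({DownUp.U K α β 1,
          DownUp.D K α β 1 * DownUp.U K α β 1 -
            lam • (DownUp.U K α β 1 * DownUp.D K α β 1)} : Set (DownUp K α β 1))) :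
    f ∈ Algebra.adjoin K
        ({DownUp.U K α β 1,
          DownUp.D K α β 1 * DownUp.U K α β 1 -
            lam • (DownUp.U K α β 1 * DownUp.D K α β 1)} : Set (DownUp K α β 1)) ∧
    g ∈ Algebra.adjoin K
        ({DownUp.U K α β 1,
          DownUp.D K α β 1 * DownUp.U K α β 1 -
            lam • (DownUp.U K α β 1 * DownUp.D K α β 1)} : Set (DownUp K α β 1)) := by
  have hb : β = -(lam * μ) := by rw [hprod, neg_neg]
  subst hsum
  subst hb
  have h0 : lam * μ ≠ 0 := fun h => hβ (by rw [h, neg_zero])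
  exact DUProof.main (left_ne_zero_of_mul h0) (right_ne_zero_of_mul h0) f g hf hg hfg
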